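/- arXiv:0807.2155 — 2 statements merged into one kernel-verified Lean document; each statement's English description precedes it below -/
import Mathlib

section
/- Fix a real number q with 0 < q < 1 and a complex number t with |t| < 1. Then the q-Mehta–Macdonald identity of type A₁ holds: (1/2π) ∫₀^{2π} θ(e^{iφ}) · μ(e^{iφ}; q, t) dφ = ∏_{j=1}^∞ (1 − t qʲ)/(1 − t² qʲ). (Formula (3.3) of the paper in the rank-one case, combined with the A₁ constant term formula.) -/
open scoped BigOperators
open Filter

noncomputable section

/-- Symmetric monomial `M_r(X) = X^r + X^{-r}` for `r ≥ 1`, `M_0 = 1`. -/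
def Msym (r : ℕ) (X : ℂ) : ℂ := if r = 0 then 1 else X ^ r + X⁻¹ ^ r

/-- Continuous q-Hermite Laurent polynomial (Macdonald polynomial of type A₁ at t = 0). -/
def PbarA1 (q : ℝ) (n : ℕ) (X : ℂ) : ℂ :=
  Msym n X + ∑ j ∈ Finset.Icc 1 (n / 2),
    (∏ i ∈ Finset.range j, (1 - (q : ℂ) ^ (n - i)) / (1 - (q : ℂ) ^ (i + 1))) *
      Msym (n - 2 * j) X

/-- Global q-Whittaker function of type A₁. -/
def whitA1 (q : ℝ) (X Λ : ℂ) : ℂ :=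
  ∑' n : ℕ, ((q ^ ((n : ℝ) ^ 2 / 4) : ℝ) : ℂ) * X ^ n * PbarA1 q n Λ /
    ∏ j ∈ Finset.Icc 1 n, (1 - (q : ℂ) ^ j)

/-- Theta function `θ(Λ) = ∑_{j ∈ ℤ} q^{j²/4} Λ^j`. -/
def thetaA1 (q : ℝ) (Λ : ℂ) : ℂ :=
  ∑' j : ℤ, ((q ^ ((j : ℝ) ^ 2 / 4) : ℝ) : ℂ) * Λ ^ j

/-- Rogers Laurent polynomial (symmetric Macdonald polynomial of type A₁). -/
def RogersA1 (q : ℝ) (t : ℂ) (n : ℕ) (X : ℂ) : ℂ :=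
  Msym n X + ∑ j ∈ Finset.Icc 1 (n / 2),
    (∏ i ∈ Finset.range j,
      ((1 - (q : ℂ) ^ (n - i)) * (1 - t * (q : ℂ) ^ i)) /
      ((1 - (q : ℂ) ^ (1 + i)) * (1 - t * (q : ℂ) ^ (n - i - 1)))) *
    Msym (n - 2 * j) X

/-- Global q,t-spherical function of type A₁, with `t = s²`. -/
def sphA1 (q s : ℝ) (X Λ : ℂ) : ℂ :=
  ∑' n : ℕ, (s : ℂ) ^ n * ((q ^ ((n : ℝ) ^ 2 / 4) : ℝ) : ℂ) *
    RogersA1 q ((s : ℂ) ^ 2) n X * RogersA1 q ((s : ℂ) ^ 2) n Λ *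
    ∏ i ∈ Finset.range n,
      ((1 - (s : ℂ) ^ 2 * (q : ℂ) ^ i) * (1 - (s : ℂ) ^ 2 * (q : ℂ) ^ (i + 1))) /
      ((1 - ((s : ℂ) ^ 2) ^ 2 * (q : ℂ) ^ i) * (1 - (q : ℂ) ^ (i + 1)))

/-- Macdonald truncated theta weight function of type A₁. -/
def muA1 (q : ℝ) (t : ℂ) (X : ℂ) : ℂ :=
  ∏' j : ℕ, ((1 - X ^ 2 * (q : ℂ) ^ j) * (1 - X⁻¹ ^ 2 * (q : ℂ) ^ (j + 1))) /
    ((1 - t * X ^ 2 * (q : ℂ) ^ j) * (1 - t * X⁻¹ ^ 2 * (q : ℂ) ^ (j + 1)))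

open Topology Metric

theorem differentiableOn_intervalIntegral_of_bounded {G : ℂ → ℝ → ℂ} {a b M : ℝ} {s : Set ℂ}
    (hs : IsOpen s) (hcont : ∀ t ∈ s, Continuous (G t))
    (hdiff : ∀ φ, DifferentiableOn ℂ (fun t => G t φ) s) (hM : ∀ t ∈ s, ∀ φ, ‖G t φ‖ ≤ M) :
    DifferentiableOn ℂ (fun t => ∫ φ in a..b, G t φ) s := by
  intro t₀ ht₀
  obtain ⟨ε, hε, hball⟩ := Metric.isOpen_iff.1 hs t₀ ht₀
  have hε2 : 0 < ε / 2 := by positivity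
  have hsub : ball t₀ (ε / 2) ⊆ s := (ball_subset_ball (by linarith)).trans hball
  have hcl : ∀ t ∈ ball t₀ (ε / 2), closedBall t (ε / 4) ⊆ s := by
    intro t ht
    refine Set.Subset.trans (fun y hy => ?_) hball
    rw [mem_ball] at ht ⊢
    rw [mem_closedBall] at hy
    linarith [dist_triangle y t t₀]
  have hderiv : ∀ t ∈ s, ∀ φ, HasDerivAt (fun t => G t φ) (deriv (fun t => G t φ) t) t :=
    fun t ht φ => ((hdiff φ).differentiableAt (hs.mem_nhds ht)).hasDerivAt
  have hmeas : MeasureTheory.AEStronglyMeasurable (fun φ => deriv (fun t => G t φ) t₀)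
      (MeasureTheory.volume.restrict (Set.uIoc a b)) := by
    have hlim : Tendsto (fun n : ℕ => t₀ + ((ε / 2 / (n + 2) : ℝ) : ℂ)) atTop (𝓝[≠] t₀) := by
      refine tendsto_nhdsWithin_iff.2 ⟨?_, Eventually.of_forall fun n => ?_⟩
      · have h : Tendsto (fun n : ℕ => ε / 2 / ((n : ℝ) + 2)) atTop (𝓝 0) :=
          tendsto_const_nhds.div_atTop
            (tendsto_atTop_add_const_right _ _ tendsto_natCast_atTop_atTop)
        have h' := (Complex.continuous_ofReal.tendsto 0).comp h
        simpa using h'.const_add t₀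
      · have : (ε / 2 / ((n : ℝ) + 2)) ≠ 0 := by positivity
        rwa [Set.mem_compl_singleton_iff, Ne, add_eq_left, Complex.ofReal_eq_zero]
    refine aestronglyMeasurable_of_tendsto_ae atTop
      (f := fun (n : ℕ) φ => slope (fun t => G t φ) t₀ (t₀ + ((ε / 2 / (n + 2) : ℝ) : ℂ)))
      (fun n => ?_) (Eventually.of_forall fun φ => ?_)
    · have hmem : t₀ + ((ε / 2 / (n + 2) : ℝ) : ℂ) ∈ s := by
        refine hball ?_
        rw [mem_ball, dist_self_add_left, Complex.norm_real, Real.norm_eq_abs,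
          abs_of_pos (by positivity), div_lt_iff₀ (by positivity)]
        nlinarith [(Nat.cast_nonneg n : (0 : ℝ) ≤ n)]
      simp only [slope_def_module]
      exact Continuous.aestronglyMeasurable
        (((hcont _ hmem).sub (hcont _ ht₀)).const_smul (_ : ℂ))
    · exact (hasDerivAt_iff_tendsto_slope.1 (hderiv t₀ ht₀ φ)).comp hlim
  refine (intervalIntegral.hasDerivAt_integral_of_dominated_loc_of_deriv_le
    (F' := fun t φ => deriv (fun t => G t φ) t) (bound := fun _ => M / (ε / 4))
    (ball_mem_nhds t₀ hε2) ?_ ((hcont t₀ ht₀).intervalIntegrable _ _) hmeas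
    (Eventually.of_forall fun φ _ t ht => ?_) intervalIntegrable_const
    (Eventually.of_forall fun φ _ t ht =>
      hderiv t (hsub ht) φ)).2.differentiableAt.differentiableWithinAt
  · filter_upwards [hs.mem_nhds ht₀] with t ht using (hcont t ht).aestronglyMeasurable
  · refine Complex.norm_deriv_le_of_forall_mem_sphere_norm_le (by positivity) ?_ fun z hz =>
      hM z (hcl t ht (sphere_subset_closedBall hz)) φ
    exact ((hdiff φ).mono (hcl t ht)).diffContOnCl_ball subset_rfl

theorem tprod_div_shift {a : ℕ → ℂ} (k : ℕ) (ha : Tendsto a atTop (𝓝 1))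
    (hne : ∀ j, a (j + k) ≠ 0) (hm : Multipliable fun j => a j / a (j + k)) :
    ∏' j, a j / a (j + k) = ∏ j ∈ Finset.range k, a j := by
  have hfin : ∀ N, (∏ j ∈ Finset.range N, a j / a (j + k)) * ∏ i ∈ Finset.range k, a (N + i) =
      ∏ j ∈ Finset.range k, a j := by
    intro N
    rw [Finset.prod_div_distrib, div_mul_eq_mul_div, div_eq_iff
      (Finset.prod_ne_zero_iff.2 fun j _ => hne j), ← Finset.prod_range_add, add_comm N k,
      Finset.prod_range_add]
    simp only [add_comm]
  have h1 : Tendsto (fun N => ∏ i ∈ Finset.range k, a (N + i)) atTop (𝓝 1) := by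
    have := tendsto_finsetProd (Finset.range k) (f := fun i N => a (N + i)) (a := fun _ => 1)
      (x := atTop) fun i _ => ha.comp (tendsto_add_atTop_nat i)
    simpa using this
  have h2 := hm.hasProd.tendsto_prod_nat.mul h1
  simp only [hfin, mul_one] at h2
  exact tendsto_nhds_unique h2 tendsto_const_nhds

theorem norm_div_sub_one_le {A B : ℂ} {c d : ℝ} (hd : 0 < d) (hAB : ‖A - B‖ ≤ c)
    (hB : d ≤ ‖B‖) : ‖A / B - 1‖ ≤ c / d := by
  have hB0 : B ≠ 0 := norm_pos_iff.1 (hd.trans_le hB)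
  rw [div_sub_one hB0, norm_div]
  exact div_le_div₀ ((norm_nonneg _).trans hAB) hAB hd hB

theorem one_sub_le_norm_one_sub {r : ℝ} {z : ℂ} (hz : ‖z‖ ≤ r) : 1 - r ≤ ‖1 - z‖ := by
  have := norm_sub_norm_le 1 z
  rw [norm_one] at this
  linarith

theorem norm_muA1_factor_sub_one_le {q r : ℝ} (hq0 : 0 < q) (hq1 : q < 1) (hr : r < 1)
    {t X : ℂ} (ht : ‖t‖ ≤ r) (hX : ‖X‖ = 1) (j : ℕ) :
    ‖((1 - X ^ 2 * (q : ℂ) ^ j) * (1 - X⁻¹ ^ 2 * (q : ℂ) ^ (j + 1))) /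
      ((1 - t * X ^ 2 * (q : ℂ) ^ j) * (1 - t * X⁻¹ ^ 2 * (q : ℂ) ^ (j + 1))) - 1‖ ≤
      6 / (1 - r) ^ 2 * q ^ j := by
  have hr0 : 0 ≤ r := (norm_nonneg t).trans ht
  have hQ1 : q ^ j ≤ 1 := pow_le_one₀ hq0.le hq1.le
  have hQ0 : 0 < q ^ j := by positivity
  have hQ' : q ^ (j + 1) ≤ q ^ j := pow_le_pow_of_le_one hq0.le hq1.le (Nat.le_succ j)
  set x := X ^ 2 * (q : ℂ) ^ j with hx
  set y := X⁻¹ ^ 2 * (q : ℂ) ^ (j + 1) with hy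
  have hxn : ‖x‖ ≤ q ^ j := by simp [hx, hX, abs_of_pos hq0]
  have hyn : ‖y‖ ≤ q ^ j := by
    have : ‖y‖ = q ^ (j + 1) := by simp [hy, hX, abs_of_pos hq0]
    rwa [this]
  rw [mul_assoc t, mul_assoc t, ← hx, ← hy, div_mul_eq_mul_div]
  have ht1 : ‖t - 1‖ ≤ 2 := (norm_sub_le _ _).trans (by rw [norm_one]; linarith)
  have ht2 : ‖1 - t ^ 2‖ ≤ 2 :=
    (norm_sub_le _ _).trans (by rw [norm_one, norm_pow]; nlinarith [norm_nonneg t])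
  have hxy : ‖x * y‖ ≤ q ^ j := by
    rw [norm_mul]
    nlinarith [norm_nonneg x, norm_nonneg y]
  refine norm_div_sub_one_le (by nlinarith) ?_ ?_
  · calc ‖(1 - x) * (1 - y) - (1 - t * x) * (1 - t * y)‖
        = ‖(t - 1) * x + (t - 1) * y + (1 - t ^ 2) * (x * y)‖ := by ring_nf
      _ ≤ ‖t - 1‖ * ‖x‖ + ‖t - 1‖ * ‖y‖ + ‖1 - t ^ 2‖ * ‖x * y‖ := by
        rw [← norm_mul, ← norm_mul, ← norm_mul]
        exact norm_add₃_le
      _ ≤ 2 * q ^ j + 2 * q ^ j + 2 * q ^ j := by gcongr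
      _ = 6 * q ^ j := by ring
  · have htx : ∀ {z : ℂ}, ‖z‖ ≤ q ^ j → ‖t * z‖ ≤ r := fun {z} hz => by
      rw [norm_mul]
      nlinarith [norm_nonneg z, norm_nonneg t]
    rw [norm_mul, sq]
    exact mul_le_mul (one_sub_le_norm_one_sub (htx hxn)) (one_sub_le_norm_one_sub (htx hyn))
      (by linarith) (norm_nonneg _)

theorem summable_theta_coeff {q : ℝ} (hq0 : 0 < q) (hq1 : q < 1) :
    Summable fun j : ℤ => q ^ ((j : ℝ) ^ 2 / 4) := by
  have hnat : Summable fun n : ℕ => q ^ ((n : ℝ) ^ 2 / 4) := by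
    refine Summable.of_nonneg_of_le (fun n => by positivity) (fun n => ?_)
      (summable_geometric_of_lt_one (r := q ^ (1 / 4 : ℝ)) (by positivity)
        (Real.rpow_lt_one hq0.le hq1 (by norm_num)))
    rw [← Real.rpow_mul_natCast hq0.le]
    refine Real.rpow_le_rpow_of_exponent_ge hq0 hq1.le ?_
    have : (n : ℝ) ≤ (n : ℝ) ^ 2 := by exact_mod_cast Nat.le_self_pow two_ne_zero n
    linarith
  exact Summable.of_nat_of_neg (by simpa using hnat) (by simpa using hnat)

theorem norm_exp_I_mul_ofReal (φ : ℝ) : ‖Complex.exp (Complex.I * (φ : ℂ))‖ = 1 := by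
  rw [mul_comm, Complex.norm_exp_ofReal_mul_I]

theorem continuous_thetaA1_exp {q : ℝ} (hq0 : 0 < q) (hq1 : q < 1) :
    Continuous fun φ : ℝ => thetaA1 q (Complex.exp (Complex.I * (φ : ℂ))) := by
  refine continuous_tsum (fun j => ?_) (summable_theta_coeff hq0 hq1) fun j φ => ?_
  · simp only [← Complex.exp_int_mul]
    fun_prop
  · rw [norm_mul, norm_zpow, norm_exp_I_mul_ofReal, one_zpow, mul_one, Complex.norm_real,
      Real.norm_of_nonneg (by positivity)]

theorem integral_exp_int_mul (m : ℤ) :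
    ∫ φ : ℝ in (0 : ℝ)..(2 * Real.pi), Complex.exp (Complex.I * (φ : ℂ)) ^ m =
      if m = 0 then 2 * (Real.pi : ℂ) else 0 := by
  split_ifs with h
  · simp [h]
  · have hc : (m : ℂ) * Complex.I ≠ 0 := by simp [h]
    simp only [← Complex.exp_int_mul, ← mul_assoc]
    rw [integral_exp_mul_complex hc]
    have : (m : ℂ) * Complex.I * ((2 * Real.pi : ℝ) : ℂ) = m * (2 * Real.pi * Complex.I) := by
      push_cast; ring
    rw [this, Complex.exp_int_mul_two_pi_mul_I]
    simp

/-- The constant term of `f(X²) θ(X)`, as a functional of `f`. -/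
def thetaFunctional (q : ℝ) (f : ℂ → ℂ) : ℂ :=
  (1 / (2 * (Real.pi : ℂ))) * ∫ φ : ℝ in (0 : ℝ)..(2 * Real.pi),
    thetaA1 q (Complex.exp (Complex.I * (φ : ℂ))) * f (Complex.exp (Complex.I * (φ : ℂ)) ^ 2)

theorem thetaFunctional_zpow {q : ℝ} (hq0 : 0 < q) (hq1 : q < 1) (n : ℤ) :
    thetaFunctional q (fun z => z ^ n) = (q : ℂ) ^ (n ^ 2) := by
  let F : ℤ → C(ℝ, ℂ) := fun j =>
    ⟨fun φ => ((q ^ ((j : ℝ) ^ 2 / 4) : ℝ) : ℂ) *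
      Complex.exp (Complex.I * (φ : ℂ)) ^ (j + 2 * n), by
        simp only [← Complex.exp_int_mul]; fun_prop⟩
  have hF : Summable fun j => ‖(F j).restrict
      (⟨Set.uIcc 0 (2 * Real.pi), isCompact_uIcc⟩ : TopologicalSpace.Compacts ℝ)‖ := by
    refine Summable.of_nonneg_of_le (fun j => norm_nonneg _) (fun j => ?_)
      (summable_theta_coeff hq0 hq1)
    refine (ContinuousMap.norm_le _ (by positivity)).2 fun φ => ?_
    simp only [F, ContinuousMap.restrict_apply, ContinuousMap.coe_mk]
    rw [norm_mul, norm_zpow, norm_exp_I_mul_ofReal, one_zpow, mul_one, Complex.norm_real,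
      Real.norm_of_nonneg (by positivity)]
  have key := intervalIntegral.tsum_intervalIntegral_eq_of_summable_norm hF
  have hint : ∀ j, ∫ φ in (0 : ℝ)..(2 * Real.pi), F j φ =
      if j = -(2 * n) then 2 * (Real.pi : ℂ) * (q : ℂ) ^ (n ^ 2) else 0 := by
    intro j
    simp only [F, ContinuousMap.coe_mk]
    rw [intervalIntegral.integral_const_mul, integral_exp_int_mul]
    simp only [add_eq_zero_iff_eq_neg]
    split_ifs with h
    · rw [mul_comm, h]
      congr 1
      rw [← Complex.ofReal_zpow, ← Real.rpow_intCast]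
      push_cast
      congr 3
      ring
    · simp
  rw [tsum_congr hint, tsum_ite_eq] at key
  rw [thetaFunctional, one_div, inv_mul_eq_iff_eq_mul₀ (by simp), key]
  refine intervalIntegral.integral_congr fun φ _ => ?_
  simp only [F, ContinuousMap.coe_mk, thetaA1, ← tsum_mul_right]
  refine tsum_congr fun j => ?_
  rw [zpow_add₀ (Complex.exp_ne_zero _), zpow_mul, mul_assoc]
  norm_cast

theorem continuous_exp_I_mul_ofReal :
    Continuous fun φ : ℝ => Complex.exp (Complex.I * (φ : ℂ)) := by
  fun_prop

theorem thetaFunctional_congr {q : ℝ} {f g : ℂ → ℂ} (h : ∀ z, ‖z‖ = 1 → f z = g z) :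
    thetaFunctional q f = thetaFunctional q g := by
  unfold thetaFunctional
  congr 1
  refine intervalIntegral.integral_congr fun φ _ => ?_
  rw [h _ (by rw [norm_pow, norm_exp_I_mul_ofReal, one_pow])]

theorem thetaFunctional_const_mul {q : ℝ} (c : ℂ) (f : ℂ → ℂ) :
    thetaFunctional q (fun z => c * f z) = c * thetaFunctional q f := by
  simp only [thetaFunctional, mul_left_comm _ c, intervalIntegral.integral_const_mul]

theorem thetaFunctional_add {q : ℝ} (hq0 : 0 < q) (hq1 : q < 1) {f g : ℂ → ℂ}
    (hf : ContinuousOn f {0}ᶜ) (hg : ContinuousOn g {0}ᶜ) :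
    thetaFunctional q (fun z => f z + g z) = thetaFunctional q f + thetaFunctional q g := by
  have hcont : ∀ {h : ℂ → ℂ}, ContinuousOn h {0}ᶜ → IntervalIntegrable (fun φ : ℝ =>
      thetaA1 q (Complex.exp (Complex.I * (φ : ℂ))) * h (Complex.exp (Complex.I * (φ : ℂ)) ^ 2))
      MeasureTheory.volume 0 (2 * Real.pi) := fun hh =>
    ((continuous_thetaA1_exp hq0 hq1).mul (hh.comp_continuous
      (continuous_exp_I_mul_ofReal.pow 2) fun φ => by simp)).intervalIntegrable _ _
  simp only [thetaFunctional, mul_add]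
  rw [intervalIntegral.integral_add (hcont hf) (hcont hg), mul_add]

/-- Functions that agree with a Laurent polynomial away from the origin. -/
inductive IsLaurentPolynomialFun : (ℂ → ℂ) → Prop
  | monomial (c : ℂ) (n : ℤ) : IsLaurentPolynomialFun fun z => c * z ^ n
  | add {f g : ℂ → ℂ} : IsLaurentPolynomialFun f → IsLaurentPolynomialFun g →
      IsLaurentPolynomialFun fun z => f z + g z
  | congr {f g : ℂ → ℂ} : IsLaurentPolynomialFun f → (∀ z ≠ 0, f z = g z) →
      IsLaurentPolynomialFun g

namespace IsLaurentPolynomialFun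

variable {f : ℂ → ℂ}

theorem monomial_mul (hf : IsLaurentPolynomialFun f) (c : ℂ) (n : ℤ) :
    IsLaurentPolynomialFun fun z => c * z ^ n * f z := by
  induction hf with
  | monomial d m =>
    refine (monomial (c * d) (n + m)).congr fun z hz => ?_
    rw [zpow_add₀ hz]
    ring
  | add _ _ ihf ihg => exact (ihf.add ihg).congr fun z _ => by ring
  | congr _ h ih => exact ih.congr fun z hz => by rw [h z hz]

theorem comp_const_mul (hf : IsLaurentPolynomialFun f) {a : ℂ} (ha : a ≠ 0) :
    IsLaurentPolynomialFun fun z => f (a * z) := by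
  induction hf with
  | monomial d m =>
    exact (monomial (d * a ^ m) m).congr fun z _ => by simp only [mul_zpow, mul_assoc]
  | add _ _ ihf ihg => exact ihf.add ihg
  | congr _ h ih => exact ih.congr fun z hz => h _ (mul_ne_zero ha hz)

theorem comp_inv (hf : IsLaurentPolynomialFun f) : IsLaurentPolynomialFun fun z => f z⁻¹ := by
  induction hf with
  | monomial d m =>
    exact (monomial d (-m)).congr fun z _ => by simp only [zpow_neg, inv_zpow]
  | add _ _ ihf ihg => exact ihf.add ihg
  | congr _ h ih => exact ih.congr fun z hz => h _ (inv_ne_zero hz)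

theorem continuousOn (hf : IsLaurentPolynomialFun f) : ContinuousOn f {0}ᶜ := by
  induction hf with
  | monomial d m =>
    exact continuousOn_const.mul (continuousOn_id.zpow₀ m fun z hz => Or.inl hz)
  | add _ _ ihf ihg => exact ihf.add ihg
  | congr _ h ih => exact ih.congr fun z hz => (h z hz).symm

theorem thetaFunctional_comp_inv {q : ℝ} (hq0 : 0 < q) (hq1 : q < 1)
    (hf : IsLaurentPolynomialFun f) :
    thetaFunctional q (fun z => f z⁻¹) = thetaFunctional q f := by
  induction hf with
  | monomial d m =>
    simp only [inv_zpow', thetaFunctional_const_mul, thetaFunctional_zpow hq0 hq1, neg_sq]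
  | add hf hg ihf ihg =>
    rw [thetaFunctional_add hq0 hq1 hf.continuousOn hg.continuousOn,
      thetaFunctional_add hq0 hq1 hf.comp_inv.continuousOn hg.comp_inv.continuousOn, ihf, ihg]
  | @congr f g _ h ih =>
    have hz : ∀ z : ℂ, ‖z‖ = 1 → z ≠ 0 := fun z hz => norm_ne_zero_iff.1 (by simp [hz])
    rw [← thetaFunctional_congr fun z hz1 => h z (hz z hz1), ← ih]
    exact thetaFunctional_congr fun z hz1 => (h _ (inv_ne_zero (hz z hz1))).symm

theorem thetaFunctional_shift {q : ℝ} (hq0 : 0 < q) (hq1 : q < 1)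
    (hf : IsLaurentPolynomialFun f) :
    thetaFunctional q (fun z => (q * z : ℂ)⁻¹ * f (q * z)) =
      thetaFunctional q fun z => f ((q : ℂ)⁻¹ * z) := by
  have hq : (q : ℂ) ≠ 0 := by exact_mod_cast hq0.ne'
  have hz : ∀ z : ℂ, ‖z‖ = 1 → z ≠ 0 := fun z hz => norm_ne_zero_iff.1 (by simp [hz])
  have hshift : ∀ {f : ℂ → ℂ}, IsLaurentPolynomialFun f →
      ContinuousOn (fun z => (q * z : ℂ)⁻¹ * f (q * z)) {0}ᶜ := fun hf =>
    (((hf.monomial_mul 1 (-1)).comp_const_mul hq).congr fun z _ => by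
      rw [zpow_neg_one, one_mul]).continuousOn
  induction hf with
  | monomial d m =>
    have h1 : thetaFunctional q (fun z => (q * z : ℂ)⁻¹ * (d * (q * z) ^ m)) =
        thetaFunctional q fun z => d * (q : ℂ) ^ (m - 1) * z ^ (m - 1) := by
      refine thetaFunctional_congr fun z hz1 => ?_
      have := hz z hz1
      rw [mul_assoc, ← mul_zpow, zpow_sub_one₀ (mul_ne_zero hq this)]
      ring
    have h2 : thetaFunctional q (fun z => d * ((q : ℂ)⁻¹ * z) ^ m) =
        thetaFunctional q fun z => d * (q : ℂ) ^ (-m) * z ^ m :=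
      thetaFunctional_congr fun z _ => by rw [mul_zpow, inv_zpow', mul_assoc]
    rw [h1, h2, thetaFunctional_const_mul, thetaFunctional_const_mul,
      thetaFunctional_zpow hq0 hq1, thetaFunctional_zpow hq0 hq1, mul_assoc, mul_assoc,
      ← zpow_add₀ hq, ← zpow_add₀ hq]
    ring_nf
  | @add f g hf hg ihf ihg =>
    simp only [mul_add]
    rw [thetaFunctional_add hq0 hq1 (hshift hf) (hshift hg),
      thetaFunctional_add hq0 hq1 (hf.comp_const_mul (inv_ne_zero hq)).continuousOn
        (hg.comp_const_mul (inv_ne_zero hq)).continuousOn, ihf, ihg]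
  | @congr f g _ h ih =>
    calc _ = thetaFunctional q (fun z => (q * z : ℂ)⁻¹ * f (q * z)) :=
          thetaFunctional_congr fun z hz1 => by rw [h _ (mul_ne_zero hq (hz z hz1))]
      _ = _ := ih
      _ = _ := thetaFunctional_congr fun z hz1 =>
          h _ (mul_ne_zero (inv_ne_zero hq) (hz z hz1))

end IsLaurentPolynomialFun

/-- The weight `muA1 q (q ^ k)` as a function of `z = X²`. -/
def muFinite (q : ℝ) (k : ℕ) (z : ℂ) : ℂ :=
  ∏ j ∈ Finset.range k, ((1 - z * (q : ℂ) ^ j) * (1 - z⁻¹ * (q : ℂ) ^ (j + 1)))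

theorem muFinite_succ (q : ℝ) (k : ℕ) (z : ℂ) :
    muFinite q (k + 1) z =
      muFinite q k z * ((1 - z * (q : ℂ) ^ k) * (1 - z⁻¹ * (q : ℂ) ^ (k + 1))) :=
  Finset.prod_range_succ _ _

theorem isLaurentPolynomialFun_muFinite (q : ℝ) (k : ℕ) :
    IsLaurentPolynomialFun (muFinite q k) := by
  induction k with
  | zero => exact (IsLaurentPolynomialFun.monomial 1 0).congr fun z _ => by simp [muFinite]
  | succ k ih =>
    have h1 := ih.add (ih.monomial_mul (-(q : ℂ) ^ k) 1)
    refine (h1.add (h1.monomial_mul (-(q : ℂ) ^ (k + 1)) (-1))).congr fun z _ => ?_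
    rw [muFinite_succ, zpow_one, zpow_neg_one]
    ring

theorem muFinite_inv {q : ℝ} (hq : (q : ℂ) ≠ 0) (k : ℕ) (z : ℂ) :
    muFinite q k z⁻¹ = muFinite q k (q * z) := by
  refine Finset.prod_congr rfl fun j _ => ?_
  rw [inv_inv, mul_inv, pow_succ]
  field_simp

theorem muFinite_mul_sub {q : ℝ} (hq : (q : ℂ) ≠ 0) (k : ℕ) {z : ℂ} (hz : z ≠ 0) :
    muFinite q k (q * z) * ((q : ℂ) ^ k - z) = muFinite q k z * (1 - (q : ℂ) ^ k * z) := by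
  induction k with
  | zero => simp [muFinite]
  | succ k ih =>
    rw [muFinite_succ, muFinite_succ]
    have h : (1 - (q * z) * (q : ℂ) ^ k) * (1 - (q * z : ℂ)⁻¹ * (q : ℂ) ^ (k + 1)) =
        ((q : ℂ) ^ k - z) * (-z⁻¹ * (1 - z * (q : ℂ) ^ (k + 1))) := by
      rw [pow_succ]
      field_simp
      ring
    calc _ = muFinite q k (q * z) * ((q : ℂ) ^ k - z) *
          (-z⁻¹ * (1 - z * (q : ℂ) ^ (k + 1)) * ((q : ℂ) ^ (k + 1) - z)) := by
          rw [h]; ring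
      _ = _ := by
          rw [ih]
          field_simp
          ring

theorem muFinite_telescope {q : ℝ} (hq : (q : ℂ) ≠ 0) {k : ℕ} {z : ℂ} (hz : z ≠ 0)
    (hzk : (q : ℂ) ^ k - z ≠ 0) :
    (1 - (q : ℂ) ^ (k + 1)) * (muFinite q (k + 1) z + muFinite q (k + 1) z⁻¹) +
        -((q : ℂ) ^ (k + 1) * (1 - (q : ℂ) ^ (2 * k + 2))) *
          (muFinite q k ((q : ℂ)⁻¹ * z) * (1 - (q : ℂ) ^ k * ((q : ℂ)⁻¹ * z))) =
      (1 - (q : ℂ) ^ (2 * k + 1)) * (1 - (q : ℂ) ^ (2 * k + 2)) *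
          (muFinite q k z + muFinite q k z⁻¹) +
        -((q : ℂ) ^ (k + 1) * (1 - (q : ℂ) ^ (2 * k + 2))) *
          ((q * z : ℂ)⁻¹ * (muFinite q k (q * z) * (1 - (q : ℂ) ^ k * (q * z)))) := by
  have h1 := muFinite_mul_sub hq k hz
  have h2 := muFinite_mul_sub hq k (mul_ne_zero (inv_ne_zero hq) hz)
  rw [mul_inv_cancel_left₀ hq] at h2
  rw [← h2, muFinite_inv hq, muFinite_inv hq, muFinite_succ, muFinite_succ,
    eq_div_of_mul_eq hzk h1]
  have e1 : (q : ℂ) ^ (2 * k + 1) = ((q : ℂ) ^ k) ^ 2 * q := by ring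
  have e2 : (q : ℂ) ^ (2 * k + 2) = ((q : ℂ) ^ k) ^ 2 * q ^ 2 := by ring
  rw [e1, e2, pow_succ]
  generalize (q : ℂ) ^ k = t at *
  field_simp
  ring

theorem thetaFunctional_muFinite_succ {q : ℝ} (hq0 : 0 < q) (hq1 : q < 1) {k : ℕ} (hk : k ≠ 0) :
    (1 - (q : ℂ) ^ (k + 1)) * thetaFunctional q (muFinite q (k + 1)) =
      (1 - (q : ℂ) ^ (2 * k + 1)) * (1 - (q : ℂ) ^ (2 * k + 2)) *
        thetaFunctional q (muFinite q k) := by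
  have hq : (q : ℂ) ≠ 0 := by exact_mod_cast hq0.ne'
  have hP := isLaurentPolynomialFun_muFinite q
  have hPplus : IsLaurentPolynomialFun fun z => muFinite q k z * (1 - (q : ℂ) ^ k * z) :=
    ((hP k).add ((hP k).monomial_mul (-(q : ℂ) ^ k) 1)).congr fun z _ => by
      rw [zpow_one]; ring
  have hsum : ∀ k, IsLaurentPolynomialFun fun z => muFinite q k z + muFinite q k z⁻¹ :=
    fun k => (hP k).add (hP k).comp_inv
  have hscale : ∀ {f : ℂ → ℂ} (c : ℂ), ContinuousOn f {0}ᶜ →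
      ContinuousOn (fun z => c * f z) {0}ᶜ := fun c hf => continuousOn_const.mul hf
  have hsumval : ∀ k, thetaFunctional q (fun z => muFinite q k z + muFinite q k z⁻¹) =
      2 * thetaFunctional q (muFinite q k) := fun k => by
    rw [thetaFunctional_add hq0 hq1 (hP k).continuousOn (hP k).comp_inv.continuousOn,
      (hP k).thetaFunctional_comp_inv hq0 hq1, two_mul]
  have hshift : IsLaurentPolynomialFun fun z =>
      (q * z : ℂ)⁻¹ * (muFinite q k (q * z) * (1 - (q : ℂ) ^ k * (q * z))) :=
    ((hPplus.monomial_mul 1 (-1)).comp_const_mul hq).congr fun z _ => by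
      rw [zpow_neg_one, one_mul]
  have key := thetaFunctional_congr (q := q) fun z hz1 =>
    muFinite_telescope hq (k := k) (z := z) (norm_ne_zero_iff.1 (by simp [hz1])) (by
      rw [sub_ne_zero]
      rintro rfl
      rw [norm_pow, Complex.norm_real, Real.norm_of_nonneg hq0.le] at hz1
      exact (pow_lt_one₀ hq0.le hq1 hk).ne hz1)
  rw [thetaFunctional_add hq0 hq1 (hscale _ (hsum _).continuousOn)
      (hscale _ (hPplus.comp_const_mul (inv_ne_zero hq)).continuousOn),
    thetaFunctional_add hq0 hq1 (hscale _ (hsum _).continuousOn) (hscale _ hshift.continuousOn),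
    thetaFunctional_const_mul, thetaFunctional_const_mul, thetaFunctional_const_mul,
    thetaFunctional_const_mul, hsumval, hsumval, hPplus.thetaFunctional_shift hq0 hq1] at key
  linear_combination key / 2

theorem thetaFunctional_muFinite_one {q : ℝ} (hq0 : 0 < q) (hq1 : q < 1) :
    thetaFunctional q (muFinite q 1) = 1 - (q : ℂ) ^ 2 := by
  have hm : ∀ (c : ℂ) (n : ℤ), ContinuousOn (fun z : ℂ => c * z ^ n) {0}ᶜ := fun c n =>
    (IsLaurentPolynomialFun.monomial c n).continuousOn
  have h : thetaFunctional q (muFinite q 1) = thetaFunctional q fun z =>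
      (1 + q) * z ^ (0 : ℤ) + ((-1) * z ^ (1 : ℤ) + (-q) * z ^ (-1 : ℤ)) :=
    thetaFunctional_congr fun z hz => by
      have : z ≠ 0 := norm_ne_zero_iff.1 (by simp [hz])
      simp only [muFinite, Finset.prod_range_one, zpow_neg_one, zpow_one, zpow_zero]
      field_simp
      ring
  rw [h, thetaFunctional_add (f := fun z => (1 + q) * z ^ (0 : ℤ))
      (g := fun z => (-1) * z ^ (1 : ℤ) + (-q) * z ^ (-1 : ℤ)) hq0 hq1 (hm _ _)
      ((hm _ _).add (hm _ _)),
    thetaFunctional_add hq0 hq1 (hm _ _) (hm _ _), thetaFunctional_const_mul,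
    thetaFunctional_const_mul, thetaFunctional_const_mul]
  simp only [thetaFunctional_zpow hq0 hq1]
  norm_num
  ring

theorem one_sub_ofReal_pow_succ_ne_zero {q : ℝ} (hq0 : 0 < q) (hq1 : q < 1) (n : ℕ) :
    1 - (q : ℂ) ^ (n + 1) ≠ 0 := by
  exact_mod_cast (sub_pos.2 (pow_lt_one₀ hq0.le hq1 n.succ_ne_zero)).ne'

theorem thetaFunctional_muFinite {q : ℝ} (hq0 : 0 < q) (hq1 : q < 1) (k : ℕ) :
    thetaFunctional q (muFinite q (k + 1)) =
      ∏ j ∈ Finset.range (k + 1), (1 - (q : ℂ) ^ (j + (k + 1) + 1)) := by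
  induction k with
  | zero => simpa using thetaFunctional_muFinite_one hq0 hq1
  | succ k ih =>
    have hne := one_sub_ofReal_pow_succ_ne_zero hq0 hq1 (k + 1)
    refine mul_left_cancel₀ hne ?_
    have h : ∀ j, (q : ℂ) ^ (j + (k + 1 + 1) + 1) = (q : ℂ) ^ (j + 1 + (k + 1) + 1) :=
      fun j => by ring
    have e := (Finset.prod_range_succ (fun j => 1 - (q : ℂ) ^ (j + (k + 1) + 1)) (k + 1)).symm.trans
      (Finset.prod_range_succ' _ _)
    rw [thetaFunctional_muFinite_succ hq0 hq1 (Nat.add_one_ne_zero k), ih,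
      Finset.prod_range_succ _ (k + 1)]
    simp only [h] at e ⊢
    linear_combination (1 - (q : ℂ) ^ (2 * k + 4)) * e

theorem one_sub_mul_ne_zero {t z : ℂ} (ht : ‖t‖ < 1) (hz : ‖z‖ ≤ 1) : 1 - t * z ≠ 0 := by
  have h : ‖t * z‖ < 1 := by
    rw [norm_mul]
    nlinarith [norm_nonneg t, norm_nonneg z]
  rw [sub_ne_zero]
  intro h1
  rw [← h1, norm_one] at h
  exact h.false

theorem norm_ofReal_pow_le_one {q : ℝ} (hq0 : 0 < q) (hq1 : q < 1) (n : ℕ) :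
    ‖(q : ℂ) ^ n‖ ≤ 1 := by
  rw [norm_pow, Complex.norm_real, Real.norm_of_nonneg hq0.le]
  exact pow_le_one₀ hq0.le hq1.le

theorem muA1_factor_denom_ne_zero {q : ℝ} (hq0 : 0 < q) (hq1 : q < 1) {t X : ℂ} (ht : ‖t‖ < 1)
    (hX : ‖X‖ = 1) (j : ℕ) :
    (1 - t * X ^ 2 * (q : ℂ) ^ j) * (1 - t * X⁻¹ ^ 2 * (q : ℂ) ^ (j + 1)) ≠ 0 := by
  rw [mul_assoc t, mul_assoc t]
  refine mul_ne_zero (one_sub_mul_ne_zero ht ?_) (one_sub_mul_ne_zero ht ?_)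
  · simpa [hX] using norm_ofReal_pow_le_one hq0 hq1 j
  · simpa [hX] using norm_ofReal_pow_le_one hq0 hq1 (j + 1)

theorem hasProdUniformlyOn_muA1 {q r : ℝ} (hq0 : 0 < q) (hq1 : q < 1) (hr : r < 1) :
    HasProdUniformlyOn (fun (j : ℕ) (p : ℂ × ℂ) =>
      ((1 - p.2 ^ 2 * (q : ℂ) ^ j) * (1 - p.2⁻¹ ^ 2 * (q : ℂ) ^ (j + 1))) /
        ((1 - p.1 * p.2 ^ 2 * (q : ℂ) ^ j) * (1 - p.1 * p.2⁻¹ ^ 2 * (q : ℂ) ^ (j + 1))))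
      (fun p => muA1 q p.1 p.2) (closedBall 0 r ×ˢ sphere 0 1) := by
  have h := Summable.hasProdUniformlyOn_nat_one_add
    (f := fun (j : ℕ) (p : ℂ × ℂ) =>
      ((1 - p.2 ^ 2 * (q : ℂ) ^ j) * (1 - p.2⁻¹ ^ 2 * (q : ℂ) ^ (j + 1))) /
        ((1 - p.1 * p.2 ^ 2 * (q : ℂ) ^ j) * (1 - p.1 * p.2⁻¹ ^ 2 * (q : ℂ) ^ (j + 1))) - 1)
    ((isCompact_closedBall (0 : ℂ) r).prod (isCompact_sphere (0 : ℂ) 1))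
    ((summable_geometric_of_lt_one hq0.le hq1).mul_left (6 / (1 - r) ^ 2))
    (Eventually.of_forall fun j p hp => norm_muA1_factor_sub_one_le hq0 hq1 hr
      (mem_closedBall_zero_iff.1 hp.1) (mem_sphere_zero_iff_norm.1 hp.2) j) fun j => by
    have hinv : ContinuousOn (fun p : ℂ × ℂ => p.2⁻¹) (closedBall 0 r ×ˢ sphere 0 1) :=
      continuousOn_snd.inv₀ fun p hp => norm_ne_zero_iff.1 (by
        rw [mem_sphere_zero_iff_norm.1 hp.2]; exact one_ne_zero)
    refine ContinuousOn.sub (ContinuousOn.div (by fun_prop) (by fun_prop) fun p hp => ?_)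
      continuousOn_const
    exact muA1_factor_denom_ne_zero hq0 hq1 ((mem_closedBall_zero_iff.1 hp.1).trans_lt hr)
      (mem_sphere_zero_iff_norm.1 hp.2) j
  simpa only [add_sub_cancel, muA1] using h

theorem continuousOn_muA1 {q r : ℝ} (hq0 : 0 < q) (hq1 : q < 1) (hr : r < 1) :
    ContinuousOn (fun p : ℂ × ℂ => muA1 q p.1 p.2) (closedBall 0 r ×ˢ sphere 0 1) := by
  refine (hasProdUniformlyOn_muA1 hq0 hq1 hr).tendstoUniformlyOn.continuousOn
    (Frequently.of_forall fun s => ?_)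
  have hinv : ContinuousOn (fun p : ℂ × ℂ => p.2⁻¹) (closedBall 0 r ×ˢ sphere 0 1) :=
    continuousOn_snd.inv₀ fun p hp => norm_ne_zero_iff.1 (by
      rw [mem_sphere_zero_iff_norm.1 hp.2]; exact one_ne_zero)
  refine continuousOn_finsetProd _ fun j _ =>
    ContinuousOn.div (by fun_prop) (by fun_prop) fun p hp => ?_
  exact muA1_factor_denom_ne_zero hq0 hq1 ((mem_closedBall_zero_iff.1 hp.1).trans_lt hr)
    (mem_sphere_zero_iff_norm.1 hp.2) j

theorem differentiableOn_muA1 {q r : ℝ} (hq0 : 0 < q) (hq1 : q < 1) (hr : r < 1) {X : ℂ}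
    (hX : ‖X‖ = 1) : DifferentiableOn ℂ (fun t => muA1 q t X) (ball 0 r) := by
  have hmem : ∀ t ∈ ball (0 : ℂ) r, (t, X) ∈ closedBall (0 : ℂ) r ×ˢ sphere (0 : ℂ) 1 :=
    fun t ht => ⟨ball_subset_closedBall ht, mem_sphere_zero_iff_norm.2 hX⟩
  have h := ((hasProdUniformlyOn_muA1 hq0 hq1 hr).tendstoUniformlyOn.comp
    (fun t : ℂ => (t, X))).mono hmem
  refine h.tendstoLocallyUniformlyOn.differentiableOn (Eventually.of_forall fun s => ?_) isOpen_ball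
  refine DifferentiableOn.fun_finsetProd fun j _ =>
    DifferentiableOn.div (by dsimp only; fun_prop) (by dsimp only; fun_prop) fun t ht => ?_
  exact muA1_factor_denom_ne_zero hq0 hq1 ((mem_ball_zero_iff.1 ht).trans hr) hX j

theorem multipliable_muA1 {q : ℝ} (hq0 : 0 < q) (hq1 : q < 1) {t X : ℂ} (ht : ‖t‖ < 1)
    (hX : ‖X‖ = 1) : Multipliable fun j : ℕ =>
      ((1 - X ^ 2 * (q : ℂ) ^ j) * (1 - X⁻¹ ^ 2 * (q : ℂ) ^ (j + 1))) /
        ((1 - t * X ^ 2 * (q : ℂ) ^ j) * (1 - t * X⁻¹ ^ 2 * (q : ℂ) ^ (j + 1))) :=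
  ((hasProdUniformlyOn_muA1 hq0 hq1 ht).hasProd (x := (t, X))
    ⟨mem_closedBall_zero_iff.2 le_rfl, mem_sphere_zero_iff_norm.2 hX⟩).multipliable

theorem tendsto_ofReal_pow_atTop {q : ℝ} (hq0 : 0 < q) (hq1 : q < 1) :
    Tendsto (fun n : ℕ => (q : ℂ) ^ n) atTop (𝓝 0) :=
  tendsto_pow_atTop_nhds_zero_of_norm_lt_one (by
    rwa [Complex.norm_real, Real.norm_of_nonneg hq0.le])

theorem norm_ofReal_pow_succ_lt_one {q : ℝ} (hq0 : 0 < q) (hq1 : q < 1) (k : ℕ) :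
    ‖(q : ℂ) ^ (k + 1)‖ < 1 := by
  rw [norm_pow, Complex.norm_real, Real.norm_of_nonneg hq0.le]
  exact pow_lt_one₀ hq0.le hq1 k.succ_ne_zero

theorem muA1_pow {q : ℝ} (hq0 : 0 < q) (hq1 : q < 1) (k : ℕ) {X : ℂ} (hX : ‖X‖ = 1) :
    muA1 q ((q : ℂ) ^ (k + 1)) X = muFinite q (k + 1) (X ^ 2) := by
  obtain ⟨A, hA⟩ : ∃ A : ℕ → ℂ, ∀ j, A j =
      (1 - X ^ 2 * (q : ℂ) ^ j) * (1 - X⁻¹ ^ 2 * (q : ℂ) ^ (j + 1)) := ⟨_, fun _ => rfl⟩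
  have hshift : ∀ j : ℕ,
      (1 - (q : ℂ) ^ (k + 1) * X ^ 2 * (q : ℂ) ^ j) *
        (1 - (q : ℂ) ^ (k + 1) * X⁻¹ ^ 2 * (q : ℂ) ^ (j + 1)) = A (j + (k + 1)) :=
    fun j => by rw [hA]; ring
  have hm := multipliable_muA1 hq0 hq1 (norm_ofReal_pow_succ_lt_one hq0 hq1 k) hX
  have hne := muA1_factor_denom_ne_zero hq0 hq1 (norm_ofReal_pow_succ_lt_one hq0 hq1 k) hX
  have hlim := tendsto_ofReal_pow_atTop hq0 hq1
  simp only [hshift, ← hA] at hm hne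
  simp only [muA1, hshift, muFinite, ← inv_pow, ← hA]
  refine tprod_div_shift (k + 1) ?_ hne hm
  have h := ((hlim.const_mul (X ^ 2)).const_sub 1).mul
    (((hlim.comp (tendsto_add_atTop_nat 1)).const_mul (X⁻¹ ^ 2)).const_sub 1)
  rw [mul_zero, mul_zero, sub_zero, mul_one] at h
  exact h.congr fun j => (hA j).symm

/-- The left-hand side of the `q`-Mehta–Macdonald identity. -/
def mehtaIntegral (q : ℝ) (t : ℂ) : ℂ :=
  ∫ φ : ℝ in (0 : ℝ)..(2 * Real.pi),
    thetaA1 q (Complex.exp (Complex.I * (φ : ℂ))) *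
      muA1 q t (Complex.exp (Complex.I * (φ : ℂ)))

theorem norm_thetaA1_exp_le {q : ℝ} (hq0 : 0 < q) (hq1 : q < 1) (φ : ℝ) :
    ‖thetaA1 q (Complex.exp (Complex.I * (φ : ℂ)))‖ ≤ ∑' j : ℤ, q ^ ((j : ℝ) ^ 2 / 4) := by
  refine tsum_of_norm_bounded (summable_theta_coeff hq0 hq1).hasSum fun j => ?_
  rw [norm_mul, norm_zpow, norm_exp_I_mul_ofReal, one_zpow, mul_one, Complex.norm_real,
    Real.norm_of_nonneg (by positivity)]

theorem differentiableOn_mehtaIntegral {q : ℝ} (hq0 : 0 < q) (hq1 : q < 1) :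
    DifferentiableOn ℂ (mehtaIntegral q) (ball 0 1) := by
  intro t₀ ht₀
  obtain ⟨r, htr, hr⟩ := exists_between (mem_ball_zero_iff.1 ht₀)
  have hcont := continuousOn_muA1 hq0 hq1 hr
  obtain ⟨C, hC⟩ := ((isCompact_closedBall (0 : ℂ) r).prod
    (isCompact_sphere (0 : ℂ) 1)).exists_bound_of_continuousOn hcont
  have hmem : ∀ t ∈ ball (0 : ℂ) r, ∀ φ : ℝ, (t, Complex.exp (Complex.I * (φ : ℂ))) ∈
      closedBall (0 : ℂ) r ×ˢ sphere (0 : ℂ) 1 := fun t ht φ =>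
    ⟨ball_subset_closedBall ht, mem_sphere_zero_iff_norm.2 (norm_exp_I_mul_ofReal φ)⟩
  have hG : ∀ t ∈ ball (0 : ℂ) r, Continuous fun φ : ℝ =>
      thetaA1 q (Complex.exp (Complex.I * (φ : ℂ))) *
        muA1 q t (Complex.exp (Complex.I * (φ : ℂ))) := fun t ht =>
    (continuous_thetaA1_exp hq0 hq1).mul
      (hcont.comp_continuous (f := fun φ : ℝ => (t, Complex.exp (Complex.I * (φ : ℂ))))
        (by fun_prop) (hmem t ht))
  have hdiff : ∀ φ : ℝ, DifferentiableOn ℂ (fun t =>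
      thetaA1 q (Complex.exp (Complex.I * (φ : ℂ))) *
        muA1 q t (Complex.exp (Complex.I * (φ : ℂ)))) (ball 0 r) := fun φ =>
    (differentiableOn_muA1 hq0 hq1 hr (norm_exp_I_mul_ofReal φ)).const_mul _
  have hM : ∀ t ∈ ball (0 : ℂ) r, ∀ φ : ℝ,
      ‖thetaA1 q (Complex.exp (Complex.I * (φ : ℂ))) *
        muA1 q t (Complex.exp (Complex.I * (φ : ℂ)))‖ ≤
      (∑' j : ℤ, q ^ ((j : ℝ) ^ 2 / 4)) * C := fun t ht φ => by
    rw [norm_mul]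
    exact mul_le_mul (norm_thetaA1_exp_le hq0 hq1 φ) (hC (t, _) (hmem t ht φ)) (norm_nonneg _)
      (tsum_nonneg fun j => by positivity)
  have h : DifferentiableOn ℂ (mehtaIntegral q) (ball 0 r) :=
    differentiableOn_intervalIntegral_of_bounded isOpen_ball hG hdiff hM
  exact (h.differentiableAt
    (isOpen_ball.mem_nhds (mem_ball_zero_iff.2 htr))).differentiableWithinAt

theorem mehta_denom_ne_zero {q : ℝ} (hq0 : 0 < q) (hq1 : q < 1) {t : ℂ} (ht : ‖t‖ < 1) (j : ℕ) :
    1 - t ^ 2 * (q : ℂ) ^ (j + 1) ≠ 0 :=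
  one_sub_mul_ne_zero (by rw [norm_pow]; exact pow_lt_one₀ (norm_nonneg t) ht two_ne_zero)
    (norm_ofReal_pow_le_one hq0 hq1 _)

theorem hasProdLocallyUniformlyOn_mehta {q r : ℝ} (hq0 : 0 < q) (hq1 : q < 1) (hr : r < 1) :
    HasProdLocallyUniformlyOn
      (fun (j : ℕ) (t : ℂ) => (1 - t * (q : ℂ) ^ (j + 1)) / (1 - t ^ 2 * (q : ℂ) ^ (j + 1)))
      (fun t => ∏' j : ℕ, (1 - t * (q : ℂ) ^ (j + 1)) / (1 - t ^ 2 * (q : ℂ) ^ (j + 1)))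
      (ball 0 r) := by
  have h := Summable.hasProdLocallyUniformlyOn_nat_one_add
    (f := fun (j : ℕ) (t : ℂ) =>
      (1 - t * (q : ℂ) ^ (j + 1)) / (1 - t ^ 2 * (q : ℂ) ^ (j + 1)) - 1)
    (isOpen_ball (x := (0 : ℂ)) (ε := r))
    ((summable_geometric_of_lt_one hq0.le hq1).mul_left (2 / (1 - r)))
    (Eventually.of_forall fun j t ht => by
      have htr := (mem_ball_zero_iff.1 ht).le
      have hQ : ‖(q : ℂ) ^ (j + 1)‖ ≤ q ^ j := by
        rw [norm_pow, Complex.norm_real, Real.norm_of_nonneg hq0.le]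
        exact pow_le_pow_of_le_one hq0.le hq1.le (Nat.le_succ j)
      rw [div_mul_eq_mul_div]
      refine norm_div_sub_one_le (by linarith) ?_ (one_sub_le_norm_one_sub ?_)
      · rw [show (1 - t * (q : ℂ) ^ (j + 1)) - (1 - t ^ 2 * (q : ℂ) ^ (j + 1)) =
          (t ^ 2 - t) * (q : ℂ) ^ (j + 1) by ring, norm_mul]
        have : ‖t ^ 2 - t‖ ≤ 2 := (norm_sub_le _ _).trans (by
          rw [norm_pow]; nlinarith [norm_nonneg t])
        gcongr
      · rw [norm_mul, norm_pow]
        have := norm_ofReal_pow_le_one hq0 hq1 (j + 1)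
        nlinarith [norm_nonneg t, norm_nonneg ((q : ℂ) ^ (j + 1)), sq_nonneg ‖t‖])
    fun j => ContinuousOn.sub (ContinuousOn.div (by fun_prop) (by fun_prop) fun t ht =>
      mehta_denom_ne_zero hq0 hq1 ((mem_ball_zero_iff.1 ht).trans hr) j) continuousOn_const
  simpa only [add_sub_cancel] using h

theorem differentiableOn_mehta_tprod {q : ℝ} (hq0 : 0 < q) (hq1 : q < 1) :
    DifferentiableOn ℂ
      (fun t => ∏' j : ℕ, (1 - t * (q : ℂ) ^ (j + 1)) / (1 - t ^ 2 * (q : ℂ) ^ (j + 1)))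
      (ball 0 1) := by
  intro t₀ ht₀
  obtain ⟨r, htr, hr⟩ := exists_between (mem_ball_zero_iff.1 ht₀)
  have h : DifferentiableOn ℂ _ (ball (0 : ℂ) r) :=
    TendstoLocallyUniformlyOn.differentiableOn (hasProdLocallyUniformlyOn_mehta hq0 hq1 hr)
      (Eventually.of_forall fun s => DifferentiableOn.fun_finsetProd fun j _ =>
        DifferentiableOn.div (by fun_prop) (by fun_prop) fun t ht =>
          mehta_denom_ne_zero hq0 hq1 ((mem_ball_zero_iff.1 ht).trans hr) j) isOpen_ball
  exact (h.differentiableAt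
    (isOpen_ball.mem_nhds (mem_ball_zero_iff.2 htr))).differentiableWithinAt

theorem mehta_tprod_pow {q : ℝ} (hq0 : 0 < q) (hq1 : q < 1) (k : ℕ) :
    ∏' j : ℕ, (1 - (q : ℂ) ^ (k + 1) * (q : ℂ) ^ (j + 1)) /
        (1 - ((q : ℂ) ^ (k + 1)) ^ 2 * (q : ℂ) ^ (j + 1)) =
      ∏ j ∈ Finset.range (k + 1), (1 - (q : ℂ) ^ (j + (k + 1) + 1)) := by
  obtain ⟨r, htr, hr⟩ := exists_between (norm_ofReal_pow_succ_lt_one hq0 hq1 k)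
  have hm := ((hasProdLocallyUniformlyOn_mehta hq0 hq1 hr).hasProd
    (mem_ball_zero_iff.2 htr)).multipliable
  have h1 : ∀ j, (q : ℂ) ^ (k + 1) * (q : ℂ) ^ (j + 1) = (q : ℂ) ^ (j + (k + 1) + 1) :=
    fun j => by ring
  have h2 : ∀ j, ((q : ℂ) ^ (k + 1)) ^ 2 * (q : ℂ) ^ (j + 1) =
      (q : ℂ) ^ (j + (k + 1) + (k + 1) + 1) := fun j => by ring
  simp only [h1, h2] at hm ⊢
  refine tprod_div_shift (a := fun j => 1 - (q : ℂ) ^ (j + (k + 1) + 1)) (k + 1) ?_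
    (fun j => one_sub_ofReal_pow_succ_ne_zero hq0 hq1 _) hm
  simpa only [sub_zero, Function.comp_def] using ((tendsto_ofReal_pow_atTop hq0 hq1).comp
    ((tendsto_add_atTop_nat 1).comp (tendsto_add_atTop_nat (k + 1)))).const_sub 1

theorem mehtaIntegral_pow {q : ℝ} (hq0 : 0 < q) (hq1 : q < 1) (k : ℕ) :
    1 / (2 * (Real.pi : ℂ)) * mehtaIntegral q ((q : ℂ) ^ (k + 1)) =
      ∏ j ∈ Finset.range (k + 1), (1 - (q : ℂ) ^ (j + (k + 1) + 1)) := by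
  rw [← thetaFunctional_muFinite hq0 hq1, thetaFunctional, mehtaIntegral]
  simp only [muA1_pow hq0 hq1 k (norm_exp_I_mul_ofReal _)]

/-- the q-Mehta–Macdonald identity of type A₁. -/
theorem qMehtaMacdonald_A1 (q : ℝ) (hq0 : 0 < q) (hq1 : q < 1) (t : ℂ) (ht : ‖t‖ < 1) :
    (1 / (2 * (Real.pi : ℂ))) *
      ∫ φ : ℝ in (0:ℝ)..(2 * Real.pi),
        thetaA1 q (Complex.exp (Complex.I * (φ : ℂ))) *
          muA1 q t (Complex.exp (Complex.I * (φ : ℂ))) =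
    ∏' j : ℕ, (1 - t * (q : ℂ) ^ (j + 1)) / (1 - t ^ 2 * (q : ℂ) ^ (j + 1)) := by
  have hanalytic := ((differentiableOn_mehtaIntegral hq0 hq1).const_mul
    (1 / (2 * (Real.pi : ℂ)))).analyticOnNhd isOpen_ball
  refine hanalytic.eqOn_of_preconnected_of_frequently_eq
    ((differentiableOn_mehta_tprod hq0 hq1).analyticOnNhd isOpen_ball)
    (convex_ball (0 : ℂ) 1).isPreconnected (mem_ball_self one_pos) ?_ (mem_ball_zero_iff.2 ht)
  have hlim : Tendsto (fun k : ℕ => (q : ℂ) ^ (k + 1)) atTop (𝓝[≠] 0) :=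
    tendsto_nhdsWithin_iff.2
      ⟨(tendsto_ofReal_pow_atTop hq0 hq1).comp (tendsto_add_atTop_nat 1),
        Eventually.of_forall fun k => pow_ne_zero _ (by exact_mod_cast hq0.ne')⟩
  exact hlim.frequently (Frequently.of_forall fun k =>
    (mehtaIntegral_pow hq0 hq1 k).trans (mehta_tprod_pow hq0 hq1 k).symm)

end
end

section
/- Fix a real number q with 0 < q < 1 and a complex number t with |t| < 1. Then the Macdonald constant term formula of type A₁ holds: (1/2π) ∫₀^{2π} μ(e^{iφ}; q, t) dφ = ∏_{j=1}^∞ (1 − t qʲ)² / ((1 − t² qʲ)(1 − qʲ)). (Formula (4.21) of the paper.) -/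
open scoped BigOperators
open Filter

noncomputable section

/-- The infinite `q`-shifted factorial `(z; q)_∞`. -/
def qPoch (q : ℝ) (z : ℂ) : ℂ := ∏' j : ℕ, (1 - z * (q : ℂ) ^ j)

lemma norm_ofReal_of_pos {q : ℝ} (hq0 : 0 < q) : ‖(q : ℂ)‖ = q := by
  rw [Complex.norm_real, Real.norm_of_nonneg hq0.le]

lemma summable_norm_neg_mul_pow {q : ℝ} (hq0 : 0 < q) (hq1 : q < 1) (z : ℂ) :
    Summable fun j : ℕ => ‖-(z * (q : ℂ) ^ j)‖ := by
  simpa [norm_ofReal_of_pos hq0, abs_of_pos hq0] using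
    (summable_geometric_of_lt_one hq0.le hq1).mul_left ‖z‖

lemma multipliable_one_sub_mul_pow {q : ℝ} (hq0 : 0 < q) (hq1 : q < 1) (z : ℂ) :
    Multipliable fun j : ℕ => 1 - z * (q : ℂ) ^ j := by
  simpa only [sub_eq_add_neg] using
    multipliable_one_add_of_summable (summable_norm_neg_mul_pow hq0 hq1 z)

lemma differentiable_qPoch {q : ℝ} (hq0 : 0 < q) (hq1 : q < 1) :
    Differentiable ℂ (qPoch q) := by
  intro z
  have hprod : HasProdLocallyUniformlyOn (fun (j : ℕ) (x : ℂ) => 1 + -(x * (q : ℂ) ^ j))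
      (fun x => ∏' j : ℕ, (1 + -(x * (q : ℂ) ^ j))) (Metric.ball 0 (‖z‖ + 1)) := by
    refine ((summable_geometric_of_lt_one hq0.le hq1).mul_left
      (‖z‖ + 1)).hasProdLocallyUniformlyOn_nat_one_add Metric.isOpen_ball
      (.of_forall fun j x hx => ?_) (fun j => by fun_prop)
    rw [mem_ball_zero_iff] at hx
    rw [norm_neg, norm_mul, norm_pow, norm_ofReal_of_pos hq0]
    gcongr
  have hd := hprod.differentiableOn
    (.of_forall fun _ => by simpa [Finset.prod_fn] using
      DifferentiableOn.finsetProd (fun _ _ => by fun_prop)) Metric.isOpen_ball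
  have hz := hd.differentiableAt (Metric.isOpen_ball.mem_nhds (x := z) (by simp))
  simp only [← sub_eq_add_neg] at hz
  exact hz

lemma qPoch_eq_mul {q : ℝ} (hq0 : 0 < q) (hq1 : q < 1) (z : ℂ) :
    qPoch q z = (1 - z) * qPoch q (q * z) := by
  have key : ∀ j : ℕ, 1 - z * (q : ℂ) ^ (j + 1) = 1 - q * z * (q : ℂ) ^ j := fun j => by ring
  rw [qPoch, tprod_eq_zero_mul' (by
    simpa only [key] using multipliable_one_sub_mul_pow hq0 hq1 (q * z))]
  simp only [key, pow_zero, mul_one, qPoch]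

lemma one_sub_ne_zero_of_norm_lt_one {z : ℂ} (hz : ‖z‖ < 1) : 1 - z ≠ 0 := by
  intro h
  rw [← sub_eq_zero.mp h] at hz
  simp at hz

lemma qPoch_ne_zero {q : ℝ} (hq0 : 0 < q) (hq1 : q < 1) {z : ℂ} (hz : ‖z‖ < 1) :
    qPoch q z ≠ 0 := by
  have h := tprod_one_add_ne_zero_of_summable (f := fun j : ℕ => -(z * (q : ℂ) ^ j))
    (fun j => ?_) (summable_norm_neg_mul_pow hq0 hq1 z)
  · simp only [← sub_eq_add_neg] at h
    exact h
  · rw [← sub_eq_add_neg]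
    apply one_sub_ne_zero_of_norm_lt_one
    rw [norm_mul, norm_pow, norm_ofReal_of_pos hq0]
    exact (mul_le_of_le_one_right (norm_nonneg _) (pow_le_one₀ hq0.le hq1.le)).trans_lt hz

/-- The weight `muA1` as a function of `Z = X ^ 2`. -/
def macWeight (q : ℝ) (t Z : ℂ) : ℂ :=
  qPoch q Z * qPoch q (q * Z⁻¹) / (qPoch q (t * Z) * qPoch q (q * (t * Z⁻¹)))

lemma norm_mul_lt_one {q : ℝ} (hq0 : 0 < q) (hq1 : q < 1) {z : ℂ} (hz : ‖z‖ < 1) :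
    ‖(q : ℂ) * z‖ < 1 := by
  rw [norm_mul, norm_ofReal_of_pos hq0]
  nlinarith [norm_nonneg z]

lemma muA1_eq_macWeight {q : ℝ} (hq0 : 0 < q) (hq1 : q < 1) {t : ℂ} (ht : ‖t‖ < 1)
    {X : ℂ} (hX : ‖X‖ = 1) : muA1 q t X = macWeight q t (X ^ 2) := by
  have m := multipliable_one_sub_mul_pow hq0 hq1
  have key : ∀ j : ℕ,
      ((1 - X ^ 2 * (q : ℂ) ^ j) * (1 - X⁻¹ ^ 2 * (q : ℂ) ^ (j + 1))) /
        ((1 - t * X ^ 2 * (q : ℂ) ^ j) * (1 - t * X⁻¹ ^ 2 * (q : ℂ) ^ (j + 1))) =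
      ((1 - X ^ 2 * (q : ℂ) ^ j) * (1 - q * (X ^ 2)⁻¹ * (q : ℂ) ^ j)) /
        ((1 - t * X ^ 2 * (q : ℂ) ^ j) * (1 - q * (t * (X ^ 2)⁻¹) * (q : ℂ) ^ j)) := by
    intro j
    rw [inv_pow]
    ring_nf
  have h1 : qPoch q (t * X ^ 2) ≠ 0 := qPoch_ne_zero hq0 hq1 (by simpa [hX] using ht)
  have h2 : qPoch q (q * (t * (X ^ 2)⁻¹)) ≠ 0 :=
    qPoch_ne_zero hq0 hq1 (norm_mul_lt_one hq0 hq1 (by simpa [hX] using ht))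
  simp only [muA1, key]
  rw [Multipliable.tprod_div₀ ((m _).mul (m _)) ((m _).mul (m _)),
    (m _).tprod_mul (m _), (m _).tprod_mul (m _)]
  · rfl
  · rw [(m _).tprod_mul (m _)]
    exact mul_ne_zero h1 h2

lemma macWeight_functional_eq {q : ℝ} (hq0 : 0 < q) (hq1 : q < 1) {t : ℂ} (ht : ‖t‖ < 1)
    {Z : ℂ} (hZ : ‖Z‖ = 1) :
    macWeight q t (q * Z) * (Z - t) = macWeight q t Z * (t * Z - 1) := by
  have hZ0 : Z ≠ 0 := norm_ne_zero_iff.mp (by simp [hZ])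
  have hq : (q : ℂ) ≠ 0 := by exact_mod_cast hq0.ne'
  have e : (q : ℂ) * (q * Z)⁻¹ = Z⁻¹ := by field_simp
  have e' : (q : ℂ) * (t * (q * Z)⁻¹) = t * Z⁻¹ := by field_simp
  have e'' : t * (q * Z) = q * (t * Z) := by ring
  have hC : qPoch q (q * (t * Z)) ≠ 0 :=
    qPoch_ne_zero hq0 hq1 (norm_mul_lt_one hq0 hq1 (by simpa [hZ] using ht))
  have hD : qPoch q (q * (t * Z⁻¹)) ≠ 0 :=
    qPoch_ne_zero hq0 hq1 (norm_mul_lt_one hq0 hq1 (by simpa [hZ] using ht))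
  have h1 : 1 - t * Z ≠ 0 := one_sub_ne_zero_of_norm_lt_one (by simpa [hZ] using ht)
  have h2 : Z - t ≠ 0 := by
    intro h
    rw [← sub_eq_zero.mp h, hZ] at ht
    exact lt_irrefl _ ht
  have h3 : 1 - t * Z⁻¹ = (Z - t) / Z := by field_simp
  rw [macWeight, macWeight, e, e', e'', qPoch_eq_mul hq0 hq1 Z, qPoch_eq_mul hq0 hq1 Z⁻¹,
    qPoch_eq_mul hq0 hq1 (t * Z), qPoch_eq_mul hq0 hq1 (t * Z⁻¹), h3, ← neg_sub 1 (t * Z)]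
  generalize 1 - t * Z = F at *
  generalize qPoch q (q * (t * Z)) = C at *
  generalize qPoch q (q * (t * Z⁻¹)) = D at *
  generalize qPoch q (q * Z⁻¹) = B
  generalize qPoch q (q * Z) = A
  field_simp
  ring

lemma macWeight_mul_parameter {q : ℝ} (hq0 : 0 < q) (hq1 : q < 1) {t : ℂ} (ht : ‖t‖ < 1)
    {Z : ℂ} (hZ : ‖Z‖ = 1) :
    macWeight q (q * t) Z = macWeight q t Z * ((1 - t * Z) * (1 - q * (t * Z⁻¹))) := by
  have hA : ‖t * Z‖ < 1 := by simpa [hZ] using ht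
  have hB : ‖q * (t * Z⁻¹)‖ < 1 := norm_mul_lt_one hq0 hq1 (by simpa [hZ] using ht)
  have hC := qPoch_ne_zero hq0 hq1 (norm_mul_lt_one hq0 hq1 hA)
  have hD := qPoch_ne_zero hq0 hq1 (norm_mul_lt_one hq0 hq1 hB)
  have h1 := one_sub_ne_zero_of_norm_lt_one hA
  have h2 := one_sub_ne_zero_of_norm_lt_one hB
  rw [macWeight, macWeight, qPoch_eq_mul hq0 hq1 (t * Z), qPoch_eq_mul hq0 hq1 (q * (t * Z⁻¹)),
    mul_assoc (q : ℂ) t Z, mul_assoc (q : ℂ) t Z⁻¹]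
  generalize qPoch q (q * (t * Z)) = C at *
  generalize qPoch q (q * (q * (t * Z⁻¹))) = D at *
  generalize 1 - q * (t * Z⁻¹) = E at *
  generalize 1 - t * Z = F at *
  field_simp

lemma differentiableAt_macWeight {q : ℝ} (hq0 : 0 < q) (hq1 : q < 1) {t : ℂ} (ht : ‖t‖ < 1)
    {Z : ℂ} (h1 : q ≤ ‖Z‖) (h2 : ‖Z‖ ≤ 1) : DifferentiableAt ℂ (macWeight q t) Z := by
  have hP := differentiable_qPoch hq0 hq1
  have hZ0 : Z ≠ 0 := norm_pos_iff.mp (hq0.trans_le h1)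
  have hC : qPoch q (t * Z) ≠ 0 := qPoch_ne_zero hq0 hq1 (by
    rw [norm_mul]; nlinarith [norm_nonneg t, norm_nonneg Z])
  have hD : qPoch q (q * (t * Z⁻¹)) ≠ 0 := qPoch_ne_zero hq0 hq1 (by
    rw [norm_mul, norm_mul, norm_inv, norm_ofReal_of_pos hq0]
    have : q * ‖Z‖⁻¹ ≤ 1 := by
      rw [← div_eq_mul_inv]
      exact div_le_one_of_le₀ h1 (norm_nonneg _)
    nlinarith [norm_nonneg t])
  unfold macWeight
  have e : ∀ {g : ℂ → ℂ}, DifferentiableAt ℂ g Z → DifferentiableAt ℂ (fun x => qPoch q (g x)) Z :=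
    fun hg => (hP _).comp Z hg
  have hi : DifferentiableAt ℂ (fun x : ℂ => x⁻¹) Z := differentiableAt_inv hZ0
  exact ((e differentiableAt_id).mul (e (hi.const_mul _))).div
    ((e (differentiableAt_id.const_mul _)).mul (e ((hi.const_mul _).const_mul _)))
    (mul_ne_zero hC hD)

/-- Circle averages of a function holomorphic on an annulus do not depend on the radius. -/
lemma circleAverage_one_eq_of_differentiableAt {q : ℝ} (hq0 : 0 < q) (hq1 : q < 1) {h : ℂ → ℂ}
    (hd : ∀ z : ℂ, q ≤ ‖z‖ → ‖z‖ ≤ 1 → DifferentiableAt ℂ h z) :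
    Real.circleAverage h 0 1 = Real.circleAverage (fun z => h (q * z)) 0 1 := by
  have hs := Complex.circleIntegral_sub_center_inv_smul_eq_of_differentiable_on_annulus_off_countable
    (c := 0) hq0 hq1.le (f := h) Set.countable_empty
    (fun z hz => by
      simp only [Set.mem_sdiff, Metric.mem_closedBall, Metric.mem_ball, dist_zero_right,
        not_lt] at hz
      exact (hd z hz.2 hz.1).continuousAt.continuousWithinAt)
    (fun z hz => by
      simp only [Set.mem_sdiff, Metric.mem_closedBall, Metric.mem_ball, dist_zero_right,
        not_le] at hz
      exact hd z hz.1.2.le hz.1.1.le)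
  have hq := Real.circleAverage_eq_circleAverage_zero_one (f := h) (c := 0) (R := q)
  simp only [add_zero] at hq
  rw [← hq, Real.circleAverage_eq_circleIntegral one_ne_zero,
    Real.circleAverage_eq_circleIntegral hq0.ne', hs]

lemma circleAverage_mul_affine {w : ℂ → ℂ} (hw : ContinuousOn w (Metric.sphere 0 1))
    (a b c : ℂ) :
    Real.circleAverage (fun z => w z * (a + b * z + c * z⁻¹)) 0 1 =
      a * Real.circleAverage w 0 1 + b * Real.circleAverage (fun z => w z * z) 0 1 +
        c * Real.circleAverage (fun z => w z * z⁻¹) 0 1 := by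
  have hne : ∀ z ∈ Metric.sphere (0 : ℂ) 1, z ≠ 0 := fun z hz h => by simp [h] at hz
  have hinv : ContinuousOn (fun z : ℂ => z⁻¹) (Metric.sphere 0 1) := continuousOn_id.inv₀ hne
  have i1 : CircleIntegrable (fun z => a • w z) 0 1 :=
    (hw.const_smul a).circleIntegrable zero_le_one
  have i2 : CircleIntegrable (fun z => b • (w z * z)) 0 1 :=
    ((hw.mul continuousOn_id).const_smul b).circleIntegrable zero_le_one
  have i3 : CircleIntegrable (fun z => c • (w z * z⁻¹)) 0 1 :=
    ((hw.mul hinv).const_smul c).circleIntegrable zero_le_one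
  simp only [← smul_eq_mul (a := a), ← smul_eq_mul (a := b) (b := Real.circleAverage _ _ _),
    ← smul_eq_mul (a := c) (b := Real.circleAverage _ _ _)]
  rw [← Real.circleAverage_fun_smul, ← Real.circleAverage_fun_smul, ← Real.circleAverage_fun_smul,
    ← Real.circleAverage_fun_add i1 i2, ← Real.circleAverage_fun_add (i1.fun_add i2) i3]
  congr 1
  ext z
  simp only [smul_eq_mul]
  ring

lemma continuousOn_macWeight {q : ℝ} (hq0 : 0 < q) (hq1 : q < 1) {t : ℂ} (ht : ‖t‖ < 1) :
    ContinuousOn (macWeight q t) (Metric.sphere 0 1) := fun z hz => by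
  rw [mem_sphere_zero_iff_norm] at hz
  exact (differentiableAt_macWeight hq0 hq1 ht (by rw [hz]; exact hq1.le)
    hz.le).continuousAt.continuousWithinAt

/-- The constant term of the weight. -/
def macCT (q : ℝ) (t : ℂ) : ℂ := Real.circleAverage (macWeight q t) 0 1

lemma circleAverage_macWeight_mul {q : ℝ} (hq0 : 0 < q) (hq1 : q < 1) {t : ℂ} (ht : ‖t‖ < 1) :
    Real.circleAverage (fun z => macWeight q t z * z) 0 1 * (1 - q * t) =
      q * (t - 1) * macCT q t := by
  have hw := continuousOn_macWeight hq0 hq1 ht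
  have hq : (q : ℂ) ≠ 0 := by exact_mod_cast hq0.ne'
  have h := circleAverage_one_eq_of_differentiableAt hq0 hq1
    (h := fun z => macWeight q t z * (-t + (q : ℂ)⁻¹ * z + 0 * z⁻¹)) (fun z h1 h2 => by
      have := differentiableAt_macWeight hq0 hq1 ht h1 h2
      simp only [zero_mul, add_zero]
      fun_prop)
  have h' : Real.circleAverage (fun z : ℂ =>
      macWeight q t (q * z) * (-t + (q : ℂ)⁻¹ * (q * z) + 0 * (q * z)⁻¹)) 0 1 =
      Real.circleAverage (fun z => macWeight q t z * (-1 + t * z + 0 * z⁻¹)) 0 1 := by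
    refine Real.circleAverage_congr_sphere fun z hz => ?_
    rw [abs_one, mem_sphere_zero_iff_norm] at hz
    have := macWeight_functional_eq hq0 hq1 ht hz
    simp only [inv_mul_cancel_left₀ hq]
    linear_combination this
  rw [h', circleAverage_mul_affine hw, circleAverage_mul_affine hw] at h
  rw [macCT]
  field_simp at h
  linear_combination h

lemma circleAverage_macWeight_mul_inv {q : ℝ} (hq0 : 0 < q) (hq1 : q < 1) {t : ℂ}
    (ht : ‖t‖ < 1) :
    Real.circleAverage (fun z => macWeight q t z * z⁻¹) 0 1 * (1 - q * t) =
      (t - 1) * macCT q t := by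
  have hw := continuousOn_macWeight hq0 hq1 ht
  have hq : (q : ℂ) ≠ 0 := by exact_mod_cast hq0.ne'
  have h := circleAverage_one_eq_of_differentiableAt hq0 hq1
    (h := fun z => macWeight q t z * (1 + 0 * z + (-t * q) * z⁻¹)) (fun z h1 h2 => by
      have := differentiableAt_macWeight hq0 hq1 ht h1 h2
      have hz : z ≠ 0 := norm_pos_iff.mp (hq0.trans_le h1)
      fun_prop (disch := exact hz))
  have h' : Real.circleAverage (fun z : ℂ =>
      macWeight q t (q * z) * (1 + 0 * (q * z) + (-t * q) * (q * z)⁻¹)) 0 1 =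
      Real.circleAverage (fun z => macWeight q t z * (t + 0 * z + (-1) * z⁻¹)) 0 1 := by
    refine Real.circleAverage_congr_sphere fun z hz => ?_
    rw [abs_one, mem_sphere_zero_iff_norm] at hz
    have hz0 : z ≠ 0 := norm_ne_zero_iff.mp (by simp [hz])
    have := macWeight_functional_eq hq0 hq1 ht hz
    field_simp
    linear_combination this
  rw [h', circleAverage_mul_affine hw, circleAverage_mul_affine hw] at h
  rw [macCT]
  linear_combination h

lemma macCT_mul_parameter {q : ℝ} (hq0 : 0 < q) (hq1 : q < 1) {t : ℂ} (ht : ‖t‖ < 1) :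
    macCT q (q * t) * (1 - q * t) = macCT q t * ((1 + q * t) * (1 - q * t ^ 2)) := by
  have h : macCT q (q * t) = Real.circleAverage (fun z =>
      macWeight q t z * ((1 + q * t ^ 2) + (-t) * z + (-(q * t)) * z⁻¹)) 0 1 := by
    refine Real.circleAverage_congr_sphere fun z hz => ?_
    rw [abs_one, mem_sphere_zero_iff_norm] at hz
    have hz0 : z ≠ 0 := norm_ne_zero_iff.mp (by simp [hz])
    simp only [macWeight_mul_parameter hq0 hq1 ht hz]
    field_simp
    ring
  rw [h, circleAverage_mul_affine (continuousOn_macWeight hq0 hq1 ht), ← macCT]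
  linear_combination (-t) * circleAverage_macWeight_mul hq0 hq1 ht -
    q * t * circleAverage_macWeight_mul_inv hq0 hq1 ht

/-- The product side of the constant term formula. -/
def macProd (q : ℝ) (t : ℂ) : ℂ := qPoch q (q * t) ^ 2 / (qPoch q (q * t ^ 2) * qPoch q q)

lemma norm_sq_lt_one {t : ℂ} (ht : ‖t‖ < 1) : ‖t ^ 2‖ < 1 := by
  rw [norm_pow]
  exact pow_lt_one₀ (norm_nonneg t) ht two_ne_zero

lemma tprod_eq_macProd {q : ℝ} (hq0 : 0 < q) (hq1 : q < 1) {t : ℂ} (ht : ‖t‖ < 1) :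
    ∏' j : ℕ, (1 - t * (q : ℂ) ^ (j + 1)) ^ 2 /
      ((1 - t ^ 2 * (q : ℂ) ^ (j + 1)) * (1 - (q : ℂ) ^ (j + 1))) = macProd q t := by
  have m := multipliable_one_sub_mul_pow hq0 hq1
  have key : ∀ j : ℕ, (1 - t * (q : ℂ) ^ (j + 1)) ^ 2 /
      ((1 - t ^ 2 * (q : ℂ) ^ (j + 1)) * (1 - (q : ℂ) ^ (j + 1))) =
      (1 - q * t * (q : ℂ) ^ j) ^ 2 /
      ((1 - q * t ^ 2 * (q : ℂ) ^ j) * (1 - q * (q : ℂ) ^ j)) := fun j => by ring_nf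
  have h1 := qPoch_ne_zero hq0 hq1 (norm_mul_lt_one hq0 hq1 (norm_sq_lt_one ht))
  have h2 : qPoch q q ≠ 0 := qPoch_ne_zero hq0 hq1 (by rwa [norm_ofReal_of_pos hq0])
  simp only [key]
  rw [Multipliable.tprod_div₀ ((m _).pow 2) ((m _).mul (m _)),
    (m _).tprod_mul (m _), (m _).tprod_pow]
  · rfl
  · rw [(m _).tprod_mul (m _)]
    exact mul_ne_zero h1 h2

lemma macProd_ne_zero {q : ℝ} (hq0 : 0 < q) (hq1 : q < 1) {t : ℂ} (ht : ‖t‖ < 1) :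
    macProd q t ≠ 0 :=
  div_ne_zero (pow_ne_zero _ (qPoch_ne_zero hq0 hq1 (norm_mul_lt_one hq0 hq1 ht)))
    (mul_ne_zero (qPoch_ne_zero hq0 hq1 (norm_mul_lt_one hq0 hq1 (norm_sq_lt_one ht)))
      (qPoch_ne_zero hq0 hq1 (by rwa [norm_ofReal_of_pos hq0])))

lemma macProd_mul_parameter {q : ℝ} (hq0 : 0 < q) (hq1 : q < 1) {t : ℂ} (ht : ‖t‖ < 1) :
    macProd q (q * t) * (1 - q * t) = macProd q t * ((1 + q * t) * (1 - q * t ^ 2)) := by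
  have n1 := norm_mul_lt_one hq0 hq1 ht
  have n2 := norm_mul_lt_one hq0 hq1 (norm_sq_lt_one ht)
  have n3 := norm_mul_lt_one hq0 hq1 n2
  have n4 := norm_mul_lt_one hq0 hq1 n3
  have h1 := one_sub_ne_zero_of_norm_lt_one n1
  have h2 := one_sub_ne_zero_of_norm_lt_one n2
  have h3 := one_sub_ne_zero_of_norm_lt_one n3
  have p1 := qPoch_ne_zero hq0 hq1 (norm_mul_lt_one hq0 hq1 n1)
  have p4 := qPoch_ne_zero hq0 hq1 n4
  have pq : qPoch q q ≠ 0 := qPoch_ne_zero hq0 hq1 (by rwa [norm_ofReal_of_pos hq0])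
  have e : (q : ℂ) * (q * t) ^ 2 = q * (q * (q * t ^ 2)) := by ring
  have hf : 1 - (q : ℂ) * (q * t ^ 2) = (1 - q * t) * (1 + q * t) := by ring
  have h5 : 1 + (q : ℂ) * t ≠ 0 := fun h => h3 (by rw [hf, h, mul_zero])
  rw [macProd, macProd, e, qPoch_eq_mul hq0 hq1 (q * t), qPoch_eq_mul hq0 hq1 (q * t ^ 2),
    qPoch_eq_mul hq0 hq1 (q * (q * t ^ 2)), hf]
  field_simp

lemma continuousOn_macCT {q : ℝ} (hq0 : 0 < q) (hq1 : q < 1) :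
    ContinuousOn (macCT q) (Metric.ball 0 1) := by
  rw [continuousOn_iff_continuous_domRestrict]
  have hP := (differentiable_qPoch hq0 hq1).continuous
  refine (intervalIntegral.continuous_parametric_intervalIntegral_of_continuous'
    (f := fun (t : Metric.ball (0 : ℂ) 1) (θ : ℝ) => macWeight q t (circleMap 0 1 θ))
    ?_ 0 (2 * Real.pi)).const_smul _
  have hi : Continuous fun p : Metric.ball (0 : ℂ) 1 × ℝ => (circleMap 0 1 p.2)⁻¹ :=
    ((continuous_circleMap 0 1).comp continuous_snd).inv₀
      fun p => circleMap_ne_center one_ne_zero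
  have hn : ∀ p : Metric.ball (0 : ℂ) 1 × ℝ, ‖(p.1 : ℂ)‖ < 1 := fun p => by
    exact mem_ball_zero_iff.mp p.1.2
  unfold macWeight
  refine Continuous.div (by fun_prop) (by fun_prop) fun p => mul_ne_zero ?_ ?_
  · exact qPoch_ne_zero hq0 hq1 (by simpa using hn p)
  · exact qPoch_ne_zero hq0 hq1 (norm_mul_lt_one hq0 hq1 (by simpa using hn p))

lemma continuousOn_macProd {q : ℝ} (hq0 : 0 < q) (hq1 : q < 1) :
    ContinuousOn (macProd q) (Metric.ball 0 1) := by
  have hP := (differentiable_qPoch hq0 hq1).continuous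
  unfold macProd
  refine ContinuousOn.div (by fun_prop) (by fun_prop) fun t ht => mul_ne_zero ?_ ?_
  · rw [mem_ball_zero_iff] at ht
    exact qPoch_ne_zero hq0 hq1 (norm_mul_lt_one hq0 hq1 (norm_sq_lt_one ht))
  · exact qPoch_ne_zero hq0 hq1 (by rwa [norm_ofReal_of_pos hq0])

lemma macCT_div_macProd_mul_parameter {q : ℝ} (hq0 : 0 < q) (hq1 : q < 1) {t : ℂ}
    (ht : ‖t‖ < 1) :
    macCT q (q * t) / macProd q (q * t) = macCT q t / macProd q t := by
  have n1 := norm_mul_lt_one hq0 hq1 ht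
  have h1 := one_sub_ne_zero_of_norm_lt_one n1
  rw [div_eq_div_iff (macProd_ne_zero hq0 hq1 n1) (macProd_ne_zero hq0 hq1 ht)]
  apply mul_right_cancel₀ h1
  linear_combination macProd q t * macCT_mul_parameter hq0 hq1 ht -
    macCT q t * macProd_mul_parameter hq0 hq1 ht

lemma macCT_div_macProd_eq_zero_parameter {q : ℝ} (hq0 : 0 < q) (hq1 : q < 1) {t : ℂ}
    (ht : ‖t‖ < 1) : macCT q t / macProd q t = macCT q 0 / macProd q 0 := by
  have hit : ∀ n : ℕ, ‖(q : ℂ) ^ n * t‖ < 1 ∧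
      macCT q (q ^ n * t) / macProd q (q ^ n * t) = macCT q t / macProd q t := by
    intro n
    induction n with
    | zero => simpa using ht
    | succ n ih =>
      rw [pow_succ', mul_assoc]
      exact ⟨norm_mul_lt_one hq0 hq1 ih.1,
        (macCT_div_macProd_mul_parameter hq0 hq1 ih.1).trans ih.2⟩
  have hlim : Tendsto (fun n : ℕ => (q : ℂ) ^ n * t) atTop (nhds 0) := by
    simpa using (tendsto_pow_atTop_nhds_zero_of_norm_lt_one (x := (q : ℂ))
      (by rwa [norm_ofReal_of_pos hq0])).mul_const t
  have hc : ContinuousAt (fun t => macCT q t / macProd q t) 0 :=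
    ((continuousOn_macCT hq0 hq1).div (continuousOn_macProd hq0 hq1) fun s hs =>
      macProd_ne_zero hq0 hq1 (by simpa using hs)).continuousAt
        (Metric.ball_mem_nhds 0 one_pos)
  refine tendsto_nhds_unique (l := atTop) (f := fun _ : ℕ => macCT q t / macProd q t) tendsto_const_nhds ?_
  exact (hc.tendsto.comp hlim).congr fun n => (hit n).2

lemma macCT_self {q : ℝ} (hq0 : 0 < q) (hq1 : q < 1) : macCT q q = 1 + q := by
  have nq : ‖(q : ℂ)‖ < 1 := by rwa [norm_ofReal_of_pos hq0]
  have hz : ∀ z ∈ Metric.sphere (0 : ℂ) |1|, macWeight q q z = 1 + q - (z + q * z⁻¹) := by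
    intro z hz
    rw [abs_one, mem_sphere_zero_iff_norm] at hz
    have hz0 : z ≠ 0 := norm_ne_zero_iff.mp (by simp [hz])
    have h1 : qPoch q (q * z) ≠ 0 := qPoch_ne_zero hq0 hq1 (by simpa [hz] using nq)
    have h2 : qPoch q (q * (q * z⁻¹)) ≠ 0 :=
      qPoch_ne_zero hq0 hq1 (norm_mul_lt_one hq0 hq1 (by simpa [hz] using nq))
    rw [macWeight, qPoch_eq_mul hq0 hq1 z, qPoch_eq_mul hq0 hq1 (q * z⁻¹)]
    generalize qPoch q (q * z) = C at *
    generalize qPoch q (q * (q * z⁻¹)) = D at *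
    field_simp
    ring
  have hid : Real.circleAverage (fun z : ℂ => z) 0 1 = 0 := by
    exact (differentiable_id (𝕜 := ℂ)).diffContOnCl.circleAverage
  have haff := circleAverage_mul_affine (w := fun _ => 1) continuousOn_const (1 + q) (-1) (-q)
  have hinv : Real.circleAverage (fun z : ℂ => z⁻¹) 0 1 = 0 := by
    refine Eq.trans ?_ hid
    exact Real.circleAverage_zero_one_congr_inv (f := fun z : ℂ => z)
  simp only [one_mul, hid, hinv, mul_zero, add_zero, Real.circleAverage_const, mul_one] at haff
  rw [← haff, macCT]
  refine Real.circleAverage_congr_sphere fun z h => ?_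
  rw [hz z h]
  ring

lemma macProd_self {q : ℝ} (hq0 : 0 < q) (hq1 : q < 1) : macProd q q = 1 + q := by
  have nq : ‖(q : ℂ)‖ < 1 := by rwa [norm_ofReal_of_pos hq0]
  have n2 := norm_mul_lt_one hq0 hq1 nq
  have n3 := norm_mul_lt_one hq0 hq1 n2
  have p := qPoch_ne_zero hq0 hq1 n3
  have h1 := one_sub_ne_zero_of_norm_lt_one nq
  have h2 := one_sub_ne_zero_of_norm_lt_one n2
  have e : (q : ℂ) * q ^ 2 = q * (q * q) := by ring
  rw [macProd, e, qPoch_eq_mul hq0 hq1 q, qPoch_eq_mul hq0 hq1 (q * q)]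
  generalize qPoch q (q * (q * q)) = A at *
  field_simp
  ring

lemma macCT_eq_macProd {q : ℝ} (hq0 : 0 < q) (hq1 : q < 1) {t : ℂ} (ht : ‖t‖ < 1) :
    macCT q t = macProd q t := by
  have nq : ‖(q : ℂ)‖ < 1 := by rwa [norm_ofReal_of_pos hq0]
  have h := (macCT_div_macProd_eq_zero_parameter hq0 hq1 ht).trans
    (macCT_div_macProd_eq_zero_parameter hq0 hq1 nq).symm
  have hne := macProd_ne_zero hq0 hq1 nq
  rw [macProd_self hq0 hq1] at h hne
  rwa [macCT_self hq0 hq1, div_self hne, div_eq_one_iff_eq (macProd_ne_zero hq0 hq1 ht)] at h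

/-- Substituting `z ^ 2` for `z` does not change averages over the unit circle. -/
lemma circleAverage_comp_sq (f : ℂ → ℂ) (hf : ContinuousOn f (Metric.sphere 0 1)) :
    Real.circleAverage (fun z => f (z ^ 2)) 0 1 = Real.circleAverage f 0 1 := by
  have hper : Function.Periodic (fun θ => f (circleMap 0 1 θ)) (2 * Real.pi) :=
    fun θ => by simp [periodic_circleMap 0 1 θ]
  have hc : Continuous fun θ => f (circleMap 0 1 θ) :=
    hf.comp_continuous (continuous_circleMap 0 1) fun θ => circleMap_mem_sphere 0 zero_le_one θ
  have hsq : ∀ θ : ℝ, circleMap 0 1 θ ^ 2 = circleMap 0 1 (2 * θ) := fun θ => by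
    simp only [circleMap, zero_add, Complex.ofReal_one, one_mul, ← Complex.exp_nat_mul]
    push_cast
    ring_nf
  have hadd := hper.intervalIntegral_add_eq (2 * Real.pi) 0
  rw [zero_add] at hadd
  simp only [Real.circleAverage, hsq]
  congr 1
  rw [intervalIntegral.integral_comp_mul_left (fun θ => f (circleMap 0 1 θ)) two_ne_zero,
    mul_zero, ← intervalIntegral.integral_add_adjacent_intervals
      (hc.intervalIntegrable 0 (2 * Real.pi)) (hc.intervalIntegrable _ _), two_mul (2 * Real.pi),
    hadd, ← two_smul ℝ, inv_smul_smul₀ two_ne_zero]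

/-- the Macdonald constant term formula of type A₁. -/
theorem macdonald_constant_term_A1 (q : ℝ) (hq0 : 0 < q) (hq1 : q < 1)
    (t : ℂ) (ht : ‖t‖ < 1) :
    (1 / (2 * (Real.pi : ℂ))) *
      ∫ φ : ℝ in (0:ℝ)..(2 * Real.pi), muA1 q t (Complex.exp (Complex.I * (φ : ℂ))) =
    ∏' j : ℕ, (1 - t * (q : ℂ) ^ (j + 1)) ^ 2 /
      ((1 - t ^ 2 * (q : ℂ) ^ (j + 1)) * (1 - (q : ℂ) ^ (j + 1))) := by
  rw [tprod_eq_macProd hq0 hq1 ht, ← macCT_eq_macProd hq0 hq1 ht, macCT,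
    ← circleAverage_comp_sq _ (continuousOn_macWeight hq0 hq1 ht), Real.circleAverage,
    ← Complex.coe_smul, smul_eq_mul]
  congr 1
  · push_cast
    rw [one_div]
  · refine intervalIntegral.integral_congr fun φ _ => ?_
    have e : circleMap 0 1 φ = Complex.exp (Complex.I * φ) := by
      simp [circleMap, mul_comm]
    simp only [← e]
    exact muA1_eq_macWeight hq0 hq1 ht (by simp)

end
end
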